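/- Let W be a finite reflection group with root system Φ, a a generic point, Φ⁺ = {α ∈ Φ : ⟨a,α⟩ > 0}, and Δ a simple system for Φ⁺. For I ⊆ Δ let W_I be the subgroup of W generated by {s_α : α ∈ I} and F_I = conv{u(a) : u ∈ W_I}. Then for all w, g ∈ W and I, J ⊆ Δ: w(F_I) ⊆ g(F_J) if and only if the coset wW_I is contained in the coset gW_J (equivalently, g⁻¹w ∈ W_J and W_I ⊆ W_J). -/

import Mathlib

/-!
All points of the orbit `W a` lie on one sphere centred at the origin, so by strict convexity an
orbit point lying in the convex hull of `W_J a` already belongs to `W_J a`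
(`mem_of_mem_convexHull_of_norm_eq`). Hence `w(F_I) ⊆ g(F_J)` says that for each `u ∈ W_I` there is
`j ∈ W_J` with `w u a = g j a`. To conclude `w u = g j` it remains to know that a generic point has
trivial stabilizer in `W` (`eq_one_of_fixes_generic`).

Triviality of the stabilizer is proved through the simple system. A simple reflection `s_δ` makes
exactly one positive root negative, namely `δ` (`eq_of_rootRefl_neg`). It follows that every root
reflection is a product of simple ones (`rootRefl_mem_genSubgroup`), and that a word `p` in simple
reflections with `p β` negative, `β` simple, satisfies the exchange condition: `p s_β` is given by
a strictly shorter word (`exchange`). An element fixing `a` preserves positivity of roots, so any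
nonempty word representing it can be shortened, down to the empty word.
-/

open scoped RealInnerProductSpace

variable {V : Type*} [NormedAddCommGroup V] [InnerProductSpace ℝ V]

/-- `s` acts as the orthogonal reflection along the nonzero vector `α`:
`s v = v - 2 (⟪v,α⟫/⟪α,α⟫) α`. -/
def IsReflAlong (s : V ≃ₗᵢ[ℝ] V) (α : V) : Prop :=
  α ≠ 0 ∧ ∀ v : V, s v = v - ((2 * ⟪v, α⟫ / ⟪α, α⟫) • α)

/-- `s` is a reflection. -/
def IsReflection (s : V ≃ₗᵢ[ℝ] V) : Prop :=
  ∃ α : V, IsReflAlong s α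

/-- A reflection group: a subgroup of the group of linear isometries of `V` generated by
the reflections it contains. -/
def IsReflectionGroup (W : Subgroup (V ≃ₗᵢ[ℝ] V)) : Prop :=
  W = Subgroup.closure {s | IsReflection s ∧ s ∈ W}

/-- `a` is a generic point for `W`: it is fixed by no reflection belonging to `W`. -/
def IsGeneric (W : Subgroup (V ≃ₗᵢ[ℝ] V)) (a : V) : Prop :=
  ∀ s ∈ W, IsReflection s → s a ≠ a

/-- The `W`-orbit of the point `a`. -/
def orbitSet (W : Subgroup (V ≃ₗᵢ[ℝ] V)) (a : V) : Set V :=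
  {x | ∃ w ∈ W, x = w a}

/-- The permutahedron `Perm^a(W)`: the convex hull of the `W`-orbit of `a`. -/
noncomputable def permutahedron (W : Subgroup (V ≃ₗᵢ[ℝ] V)) (a : V) : Set V :=
  convexHull ℝ (orbitSet W a)

/-- A root system for `W`. -/
structure IsRootSystem (W : Subgroup (V ≃ₗᵢ[ℝ] V)) (Φ : Set V) : Prop where
  finite : Φ.Finite
  nonempty : Φ.Nonempty
  ne_zero : ∀ α ∈ Φ, α ≠ 0
  gen : W = Subgroup.closure {s | ∃ α ∈ Φ, IsReflAlong s α}
  line : ∀ α ∈ Φ, {β ∈ Φ | ∃ t : ℝ, β = t • α} = {α, -α}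
  stable : ∀ w ∈ W, (⇑w) '' Φ = Φ

/-- The positive system determined by the generic point `a`: roots `α` with `⟪a, α⟫ > 0`. -/
def posSystem (a : V) (Φ : Set V) : Set V :=
  {α ∈ Φ | 0 < ⟪a, α⟫}

/-- `Δ` is a simple system for the positive system `Φp`: `Δ ⊆ Φp` is linearly independent and
every element of `Φp` is a linear combination of `Δ` with nonnegative coefficients. -/
def IsSimpleSystem (Φp Δ : Set V) : Prop :=
  Δ ⊆ Φp ∧ LinearIndependent ℝ ((↑) : Δ → V) ∧
    ∀ β ∈ Φp, ∃ c : V →₀ ℝ, (c.support : Set V) ⊆ Δ ∧ (∀ v : V, 0 ≤ c v) ∧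
      β = c.sum fun v r => r • v

/-- The subgroup generated by the reflections along the vectors of `I`. -/
def genSubgroup (I : Set V) : Subgroup (V ≃ₗᵢ[ℝ] V) :=
  Subgroup.closure {s | ∃ β ∈ I, IsReflAlong s β}

/-- The orthogonal reflection along `α` as a linear isometry. It is the identity for `α = 0`. -/
noncomputable def rootRefl (α : V) : V ≃ₗᵢ[ℝ] V := (ℝ ∙ α)ᗮ.reflection

lemma rootRefl_apply (α v : V) : rootRefl α v = v - (2 * ⟪v, α⟫ / ⟪α, α⟫) • α := by
  rw [rootRefl, Submodule.reflection_orthogonal_apply, Submodule.reflection_singleton_apply,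
    real_inner_self_eq_norm_sq, real_inner_comm, two_smul, neg_sub, ← add_smul]
  congr 2
  simp only [RCLike.ofReal_real_eq_id, id_eq]
  ring

lemma isReflAlong_rootRefl {α : V} (h : α ≠ 0) : IsReflAlong (rootRefl α) α := ⟨h, rootRefl_apply α⟩

lemma IsReflAlong.eq_rootRefl {s : V ≃ₗᵢ[ℝ] V} {α : V} (h : IsReflAlong s α) : s = rootRefl α := by
  ext v
  rw [h.2, rootRefl_apply]

lemma rootRefl_self (α : V) : rootRefl α α = -α :=
  Submodule.reflection_orthogonalComplement_singleton_eq_neg α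

lemma rootRefl_mul_self (α : V) : rootRefl α * rootRefl α = 1 := by
  ext v
  exact Submodule.reflection_reflection (ℝ ∙ α)ᗮ v

lemma rootRefl_inv (α : V) : (rootRefl α)⁻¹ = rootRefl α := inv_eq_of_mul_eq_one_left (rootRefl_mul_self α)

lemma rootRefl_map (u : V ≃ₗᵢ[ℝ] V) (α : V) : rootRefl (u α) * u = u * rootRefl α := by
  ext v
  simp [rootRefl_apply, LinearIsometryEquiv.inner_map_map]

lemma rootRefl_mem_of_mem {I : Set V} {β : V} (hβ : β ∈ I) (h : β ≠ 0) :
    rootRefl β ∈ genSubgroup I :=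
  Subgroup.subset_closure ⟨β, hβ, isReflAlong_rootRefl h⟩

/-- A point of a sphere centred at the origin is an extreme point of the ball: it lies in the convex
hull of a subset of the sphere only if it lies in that subset. -/
lemma mem_of_mem_convexHull_of_norm_eq {S : Set V} {y : V} (hS : ∀ x ∈ S, ‖x‖ = ‖y‖)
    (hy : y ∈ convexHull ℝ S) : y ∈ S := by
  by_contra hn
  have hconv : Convex ℝ {z : V | ⟪y, z⟫ < ⟪y, y⟫} :=
    convex_halfSpace_lt ⟨fun a b => inner_add_right _ _ _, fun c a => by simp [inner_smul_right]⟩ _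
  have hsub : S ⊆ {z : V | ⟪y, z⟫ < ⟪y, y⟫} := by
    intro x hx
    have hne : y - x ≠ 0 := sub_ne_zero.2 fun h => hn (h ▸ hx)
    have h1 : 0 < ‖y - x‖ ^ 2 := by positivity
    rw [norm_sub_sq_real, hS x hx] at h1
    simp only [Set.mem_ofPred_eq, real_inner_self_eq_norm_sq]
    linarith
  have hlt : ⟪y, y⟫ < ⟪y, y⟫ := convexHull_min hsub hconv hy
  exact lt_irrefl _ hlt

section RootSystem

variable {W : Subgroup (V ≃ₗᵢ[ℝ] V)} {Φ Δ : Set V} {a : V}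

lemma rootRefl_mem_of_root (hΦ : IsRootSystem W Φ) {α : V} (hα : α ∈ Φ) : rootRefl α ∈ W := by
  rw [hΦ.gen]
  exact rootRefl_mem_of_mem hα (hΦ.ne_zero α hα)

lemma map_root (hΦ : IsRootSystem W Φ) {u : V ≃ₗᵢ[ℝ] V} (hu : u ∈ W) {α : V} (hα : α ∈ Φ) :
    u α ∈ Φ := by
  rw [← hΦ.stable u hu]
  exact ⟨α, hα, rfl⟩

lemma neg_root (hΦ : IsRootSystem W Φ) {α : V} (hα : α ∈ Φ) : -α ∈ Φ := by
  rw [← rootRefl_self]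
  exact map_root hΦ (rootRefl_mem_of_root hΦ hα) hα

lemma inner_root_ne_zero (hΦ : IsRootSystem W Φ) (ha : IsGeneric W a) {α : V} (hα : α ∈ Φ) :
    ⟪a, α⟫ ≠ 0 := by
  intro h
  refine ha _ (rootRefl_mem_of_root hΦ hα) ⟨α, isReflAlong_rootRefl (hΦ.ne_zero α hα)⟩ ?_
  simp [rootRefl_apply, h]

/-- The only positive root made negative by a simple reflection `s_δ` is `δ`: in the expansion of a
root in simple roots `s_δ` changes only the coefficient of `δ`, and by linear independence the
other coefficients cannot have both signs. -/
lemma eq_of_rootRefl_neg (hΦ : IsRootSystem W Φ) (hΔ : IsSimpleSystem (posSystem a Φ) Δ)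
    {δ β : V} (hδ : δ ∈ Δ) (hβ : β ∈ posSystem a Φ) (hneg : ⟪a, rootRefl δ β⟫ < 0) : β = δ := by
  obtain ⟨hsub, hli, hexp⟩ := hΔ
  have hδp := hsub hδ
  have hm : -(rootRefl δ β) ∈ posSystem a Φ :=
    ⟨neg_root hΦ (map_root hΦ (rootRefl_mem_of_root hΦ hδp.1) hβ.1), by
      rw [inner_neg_right]; linarith⟩
  obtain ⟨c, hcs, hc0, hc⟩ := hexp β hβ
  obtain ⟨d, hds, hd0, hd⟩ := hexp _ hm
  have hli' : LinearIndepOn ℝ id Δ := hli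
  rw [linearIndepOn_iff] at hli'
  set t : ℝ := 2 * ⟪β, δ⟫ / ⟪δ, δ⟫ with ht
  have hz := hli' (c + d - Finsupp.single δ t)
    (sub_mem (add_mem ((Finsupp.mem_supported ℝ c).2 hcs) ((Finsupp.mem_supported ℝ d).2 hds))
      (Finsupp.single_mem_supported ℝ t hδ)) (by
    have hc' : Finsupp.linearCombination ℝ (id : V → V) c = β := hc.symm
    have hd' : Finsupp.linearCombination ℝ (id : V → V) d = -(rootRefl δ β) := hd.symm
    rw [map_sub, map_add, hc', hd', Finsupp.linearCombination_single, rootRefl_apply]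
    simp [ht])
  have hc1 : ∀ v, v ≠ δ → c v = 0 := by
    intro v hv
    have := DFunLike.congr_fun hz v
    simp only [Finsupp.coe_sub, Finsupp.coe_add, Pi.sub_apply, Pi.add_apply,
      Finsupp.single_eq_of_ne hv, Finsupp.coe_zero, Pi.zero_apply] at this
    linarith [hc0 v, hd0 v]
  have hcs : c = Finsupp.single δ (c δ) := by
    ext v
    by_cases hv : v = δ
    · subst hv; simp
    · rw [hc1 v hv, Finsupp.single_eq_of_ne hv]
  have hmul : β = c δ • δ := by
    rw [hcs, Finsupp.sum_single_index (zero_smul ℝ δ)] at hc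
    exact hc
  have hline : β ∈ ({δ, -δ} : Set V) := by
    rw [← hΦ.line δ hδp.1]
    exact ⟨hβ.1, _, hmul⟩
  rcases hline with h | h
  · exact h
  · have h1 := hβ.2
    have h2 := hδp.2
    rw [Set.mem_singleton_iff.1 h, inner_neg_right] at h1
    linarith

/-- Reflections along positive roots are products of simple reflections. The induction is on the
value `⟪a, α⟫`, which takes finitely many values: some simple `δ` has `⟪α, δ⟫ > 0`, and `s_δ α`
is then either a positive root with a smaller value or `-δ`. -/
lemma rootRefl_mem_genSubgroup (hΦ : IsRootSystem W Φ) (ha : IsGeneric W a)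
    (hΔ : IsSimpleSystem (posSystem a Φ) Δ) {α : V} (hα : α ∈ posSystem a Φ) :
    rootRefl α ∈ genSubgroup Δ := by
  have hfin : (posSystem a Φ).Finite := hΦ.finite.subset fun x hx => hx.1
  have hwf : (posSystem a Φ).WellFoundedOn (fun x y : V => (⟪a, x⟫ : ℝ) < ⟪a, y⟫) := by
    have : IsStrictOrder V (fun x y : V => (⟪a, x⟫ : ℝ) < ⟪a, y⟫) :=
      { irrefl := fun x => lt_irrefl (⟪a, x⟫ : ℝ)
        trans := fun x y z (h : (⟪a, x⟫ : ℝ) < ⟪a, y⟫) (h' : (⟪a, y⟫ : ℝ) < ⟪a, z⟫) => h.trans h' }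
    exact hfin.wellFoundedOn
  refine hwf.induction (P := fun x => rootRefl x ∈ genSubgroup Δ) hα ?_
  intro α hα ih
  have hα0 : 0 < ⟪α, α⟫ := real_inner_self_pos.2 (hΦ.ne_zero α hα.1)
  obtain ⟨δ, hδ, hpos⟩ : ∃ δ ∈ Δ, 0 < ⟪α, δ⟫ := by
    by_contra! hcon
    obtain ⟨c, hcs, hc0, hc⟩ := hΔ.2.2 α hα
    have : ⟪α, c.sum fun v r => r • v⟫ ≤ 0 := by
      rw [Finsupp.sum, inner_sum]
      refine Finset.sum_nonpos fun v hv => ?_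
      rw [inner_smul_right]
      exact mul_nonpos_of_nonneg_of_nonpos (hc0 v) (hcon v (hcs hv))
    rw [← hc] at this
    linarith
  have hδp := hΔ.1 hδ
  have hδ0 := hΦ.ne_zero δ hδp.1
  have hδm := rootRefl_mem_of_mem hδ hδ0
  by_cases hαδ : α = δ
  · rwa [hαδ]
  have hr : rootRefl δ α ∈ Φ := map_root hΦ (rootRefl_mem_of_root hΦ hδp.1) hα.1
  have hge : 0 < ⟪a, rootRefl δ α⟫ :=
    lt_of_le_of_ne (not_lt.1 fun h => hαδ (eq_of_rootRefl_neg hΦ hΔ hδ hα h))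
      (inner_root_ne_zero hΦ ha hr).symm
  have hlt : ⟪a, rootRefl δ α⟫ < ⟪a, α⟫ := by
    have hδδ : 0 < ⟪δ, δ⟫ := real_inner_self_pos.2 hδ0
    have h2 : 0 < 2 * ⟪α, δ⟫ / ⟪δ, δ⟫ * ⟪a, δ⟫ := mul_pos (by positivity) hδp.2
    rw [rootRefl_apply, inner_sub_right, inner_smul_right]
    linarith
  have hmem := ih _ ⟨hr, hge⟩ hlt
  have heq : rootRefl α = rootRefl δ * rootRefl (rootRefl δ α) * rootRefl δ := by
    rw [mul_assoc, rootRefl_map, ← mul_assoc, rootRefl_mul_self, one_mul]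
  rw [heq]
  exact mul_mem (mul_mem hδm hmem) hδm

/-- The product `s_{α₁} ⋯ s_{αₖ}` of the reflections along the vectors of a list. -/
noncomputable def wordProd (L : List V) : V ≃ₗᵢ[ℝ] V := (L.map rootRefl).prod

lemma wordProd_mem (hΦ : IsRootSystem W Φ) {L : List V} (hL : ∀ x ∈ L, x ∈ Φ) :
    wordProd L ∈ W := by
  refine list_prod_mem fun x hx => ?_
  obtain ⟨y, hy, rfl⟩ := List.mem_map.1 hx
  exact rootRefl_mem_of_root hΦ (hL y hy)

lemma exists_word (hΦ : IsRootSystem W Φ) (ha : IsGeneric W a)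
    (hΔ : IsSimpleSystem (posSystem a Φ) Δ) {w : V ≃ₗᵢ[ℝ] V} (hw : w ∈ W) :
    ∃ L : List V, (∀ x ∈ L, x ∈ Δ) ∧ wordProd L = w := by
  have hw' : w ∈ genSubgroup Δ := by
    rw [hΦ.gen] at hw
    refine (Subgroup.closure_le _).2 ?_ hw
    rintro s ⟨α, hα, hs⟩
    rw [hs.eq_rootRefl]
    rcases lt_or_gt_of_ne (inner_root_ne_zero hΦ ha hα) with h | h
    · have h1 : rootRefl α = rootRefl (-α) := by
        ext v
        simp [rootRefl_apply, neg_div]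
      rw [h1]
      exact rootRefl_mem_genSubgroup hΦ ha hΔ ⟨neg_root hΦ hα, by rw [inner_neg_right]; linarith⟩
    · exact rootRefl_mem_genSubgroup hΦ ha hΔ ⟨hα, h⟩
  clear hw
  induction hw' using Subgroup.closure_induction with
  | mem s hs =>
    obtain ⟨β, hβ, hs⟩ := hs
    exact ⟨[β], by simpa using hβ, by simp [wordProd, hs.eq_rootRefl]⟩
  | one => exact ⟨[], by simp, rfl⟩
  | mul x y _ _ hx hy =>
    obtain ⟨L, hL, rfl⟩ := hx
    obtain ⟨M, hM, rfl⟩ := hy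
    refine ⟨L ++ M, fun z hz => ?_, by simp [wordProd]⟩
    rcases List.mem_append.1 hz with h | h
    exacts [hL z h, hM z h]
  | inv x _ hx =>
    obtain ⟨L, hL, rfl⟩ := hx
    refine ⟨L.reverse, fun z hz => hL z (List.mem_reverse.1 hz), ?_⟩
    have hcomp : (fun x => x⁻¹) ∘ (rootRefl : V → V ≃ₗᵢ[ℝ] V) = rootRefl := funext rootRefl_inv
    rw [wordProd, wordProd, List.prod_inv_reverse, List.map_map, hcomp, List.map_reverse]

/-- Exchange condition: if a word in simple reflections makes the simple root `β` negative, then its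
product with `s_β` is represented by a strictly shorter word. -/
lemma exchange (hΦ : IsRootSystem W Φ) (ha : IsGeneric W a)
    (hΔ : IsSimpleSystem (posSystem a Φ) Δ) {β : V} (hβ : β ∈ Δ) (L : List V)
    (hL : ∀ x ∈ L, x ∈ Δ) (hneg : ⟪a, wordProd L β⟫ < 0) :
    ∃ M : List V, (∀ x ∈ M, x ∈ Δ) ∧ M.length < L.length ∧
      wordProd M = wordProd L * rootRefl β := by
  induction L with
  | nil =>
    have h : (0 : ℝ) < ⟪a, β⟫ := (hΔ.1 hβ).2
    have hneg' : ⟪a, β⟫ < 0 := hneg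
    linarith
  | cons α L ih =>
    have hL' : ∀ x ∈ L, x ∈ Δ := fun x hx => hL x (List.mem_cons_of_mem _ hx)
    have hα : α ∈ Δ := hL α List.mem_cons_self
    have hcons : ∀ N : List V, wordProd (α :: N) = rootRefl α * wordProd N := fun N => by
      simp [wordProd]
    have hroot : wordProd L β ∈ Φ :=
      map_root hΦ (wordProd_mem hΦ fun x hx => (hΔ.1 (hL' x hx)).1) (hΔ.1 hβ).1
    rcases lt_or_gt_of_ne (inner_root_ne_zero hΦ ha hroot) with h | h
    · obtain ⟨M, hM, hlen, heq⟩ := ih hL' h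
      refine ⟨α :: M, ?_, by simpa using hlen, by rw [hcons, hcons, heq, mul_assoc]⟩
      intro x hx
      rcases List.mem_cons.1 hx with rfl | hx
      exacts [hα, hM x hx]
    -- With `p = wordProd L`, the root `p β` is made negative by `s_α`, so `p β = α` and
    -- `s_α p s_β = s_α s_α p = p`.
    · have hpα : wordProd L β = α :=
        eq_of_rootRefl_neg hΦ hΔ hα ⟨hroot, h⟩ (by rw [hcons] at hneg; exact hneg)
      refine ⟨L, hL', by simp, ?_⟩
      rw [hcons, mul_assoc, ← rootRefl_map, hpα, ← mul_assoc, rootRefl_mul_self, one_mul]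

/-- A generic point has trivial stabilizer. -/
lemma eq_one_of_fixes_generic (hΦ : IsRootSystem W Φ) (ha : IsGeneric W a)
    (hΔ : IsSimpleSystem (posSystem a Φ) Δ) {w : V ≃ₗᵢ[ℝ] V} (hw : w ∈ W) (hwa : w a = a) :
    w = 1 := by
  obtain ⟨L, hL, rfl⟩ := exists_word hΦ ha hΔ hw
  clear hw
  induction hn : L.length using Nat.strong_induction_on generalizing L with
  | _ n ih =>
    rcases List.eq_nil_or_concat' L with rfl | ⟨P, β, rfl⟩
    · rfl
    have hβ : β ∈ Δ := hL β (by simp)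
    have hsnoc : wordProd (P ++ [β]) = wordProd P * rootRefl β := by simp [wordProd]
    have hneg : ⟪a, wordProd P β⟫ < 0 := by
      have h1 : (0 : ℝ) < ⟪a, β⟫ := (hΔ.1 hβ).2
      rw [← LinearIsometryEquiv.inner_map_map (wordProd (P ++ [β])) a β, hwa, hsnoc,
        LinearIsometryEquiv.coe_mul, Function.comp_apply, rootRefl_self, map_neg, inner_neg_right] at h1
      linarith
    obtain ⟨M, hM, hlen, heq⟩ :=
      exchange hΦ ha hΔ hβ P (fun x hx => hL x (List.mem_append_left _ hx)) hneg
    rw [← hsnoc] at heq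
    rw [← heq]
    refine ih M.length ?_ M hM (by rw [heq, hwa]) rfl
    rw [← hn, List.length_append]
    omega

lemma genSubgroup_le (hΦ : IsRootSystem W Φ) (hΔ : IsSimpleSystem (posSystem a Φ) Δ) {I : Set V}
    (hI : I ⊆ Δ) : genSubgroup I ≤ W := by
  rw [hΦ.gen]
  refine Subgroup.closure_mono ?_
  rintro s ⟨β, hβ, hs⟩
  exact ⟨β, (hΔ.1 (hI hβ)).1, hs⟩

end RootSystem

/-- containment of translates of faces corresponds to containment of cosets:
`w(F_I) ⊆ g(F_J) ↔ wW_I ⊆ gW_J`. -/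
theorem face_translate_subset_iff_coset_subset [FiniteDimensional ℝ V]
    (W : Subgroup (V ≃ₗᵢ[ℝ] V)) (hWfin : (W : Set (V ≃ₗᵢ[ℝ] V)).Finite)
    (Φ : Set V) (hΦ : IsRootSystem W Φ) (a : V) (ha : IsGeneric W a)
    (Δ : Set V) (hΔ : IsSimpleSystem (posSystem a Φ) Δ)
    (I J : Set V) (hI : I ⊆ Δ) (hJ : J ⊆ Δ)
    (w g : V ≃ₗᵢ[ℝ] V) (hw : w ∈ W) (hg : g ∈ W) :
    (⇑w) '' permutahedron (genSubgroup I) a ⊆ (⇑g) '' permutahedron (genSubgroup J) a ↔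
      (fun u => w * u) '' (genSubgroup I : Set (V ≃ₗᵢ[ℝ] V)) ⊆
        (fun u => g * u) '' (genSubgroup J : Set (V ≃ₗᵢ[ℝ] V)) := by
  constructor
  · rintro h _ ⟨u, hu, rfl⟩
    obtain ⟨z, hz, hzeq⟩ := h ⟨u a, subset_convexHull ℝ _ ⟨u, hu, rfl⟩, rfl⟩
    have hnorm : ‖z‖ = ‖a‖ := by
      rw [← g.norm_map, hzeq, w.norm_map, u.norm_map]
    have hzS : z ∈ orbitSet (genSubgroup J) a := by
      refine mem_of_mem_convexHull_of_norm_eq ?_ hz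
      rintro _ ⟨v, -, rfl⟩
      rw [v.norm_map, hnorm]
    obtain ⟨j, hj, rfl⟩ := hzS
    refine ⟨j, hj, ?_⟩
    have huW := genSubgroup_le hΦ hΔ hI hu
    have hjW := genSubgroup_le hΦ hΔ hJ hj
    have hone : (g * j)⁻¹ * (w * u) = 1 := by
      refine eq_one_of_fixes_generic hΦ ha hΔ
        (mul_mem (inv_mem (mul_mem hg hjW)) (mul_mem hw huW)) ?_
      have h1 : (w * u) a = (g * j) a := hzeq.symm
      rw [LinearIsometryEquiv.coe_mul, Function.comp_apply, h1]
      exact (g * j).symm_apply_apply a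
    exact inv_mul_eq_one.1 hone
  · intro h
    have hlin : ∀ (f : V ≃ₗᵢ[ℝ] V) (S : Set V), f '' convexHull ℝ S = convexHull ℝ (f '' S) :=
      fun f S => LinearMap.image_convexHull f.toLinearEquiv.toLinearMap S
    rw [permutahedron, permutahedron, hlin, hlin]
    refine convexHull_mono ?_
    rintro _ ⟨_, ⟨u, hu, rfl⟩, rfl⟩
    obtain ⟨j, hj, hju⟩ := h ⟨u, hu, rfl⟩
    exact ⟨j a, ⟨j, hj, rfl⟩, DFunLike.congr_fun hju a⟩
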